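/- Let W be a nonnegative integer-valued random variable with mean μ ∈ (0,∞), and let W^s, defined on the same probability space, have the W-size-biased distribution. Let a < μ be an integer, λ = μ − a, and let k be an integer with k > λ and k ≥ 2. Then |P(W − a ≥ k)/F̄_λ(k) − 1| ≤ C1(λ,k)·{ μ·E|W + 1 − W^s| + |μ − λ| } + P(W − a ≤ −2). -/

import Mathlib

open MeasureTheory ProbabilityTheory Finset Real

/-- Poisson point probability `π_j(λ) = e^{-λ} λ^j / j!`. -/
noncomputable def poissonPMF (l : ℝ) (j : ℕ) : ℝ := Real.exp (-l) * l ^ j / (Nat.factorial j)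

/-- Poisson CDF `F_λ(j) = Σ_{i=0}^{j} π_i(λ)`. -/
noncomputable def poissonCDF (l : ℝ) (j : ℕ) : ℝ := ∑ i ∈ Finset.range (j + 1), poissonPMF l i

/-- Poisson right tail `F̄_λ(j) = Σ_{i=j}^{∞} π_i(λ)`. -/
noncomputable def poissonTail (l : ℝ) (j : ℕ) : ℝ := ∑' i : ℕ, poissonPMF l (j + i)

/-- `C0(λ,k) = F_λ(k-1)/(k·π_k(λ))`. -/
noncomputable def SteinC0 (l : ℝ) (k : ℕ) : ℝ := poissonCDF l (k - 1) / (k * poissonPMF l k)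

/-- `C1(λ,k)`. -/
noncomputable def SteinC1 (l : ℝ) (k : ℕ) : ℝ :=
  SteinC0 l k * (1 - min (poissonCDF l (k - 2) * l / ((k - 1) * poissonCDF l (k - 1)))
    (poissonTail l (k + 1) * k / (poissonTail l k * l)))

/-- `C2(λ,k)`. -/
noncomputable def SteinC2 (l : ℝ) (k : ℕ) : ℝ :=
  SteinC0 l k * (2 - poissonCDF l (k - 2) * l / ((k - 1) * poissonCDF l (k - 1))
    - poissonTail l (k + 1) * k / (poissonTail l k * l))

/-- `f` solves the Poisson–Stein equation for the indicator of `[k,∞)`, with `f 0 = f 1`. -/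
def IsSteinSolution (l : ℝ) (k : ℕ) (f : ℕ → ℝ) : Prop :=
  f 0 = f 1 ∧ ∀ j : ℕ, l * f (j + 1) - (j : ℝ) * f j =
    (if k ≤ j then (1 : ℝ) else 0) - poissonTail l k

lemma ppmf_pos {l : ℝ} (hl : 0 < l) (j : ℕ) : 0 < poissonPMF l j := by
  unfold _root_.poissonPMF; positivity

lemma ppmf_succ (l : ℝ) (j : ℕ) :
    ((j : ℝ) + 1) * poissonPMF l (j + 1) = l * poissonPMF l j := by
  unfold _root_.poissonPMF
  rw [Nat.factorial_succ, pow_succ]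
  have : (Nat.factorial j : ℝ) ≠ 0 := by positivity
  have : (j : ℝ) + 1 ≠ 0 := by positivity
  push_cast
  field_simp

lemma ppmf_hasSum (l : ℝ) : HasSum (poissonPMF l) 1 := by
  have h := (NormedSpace.expSeries_div_hasSum_exp (𝔸 := ℝ) l).mul_left (Real.exp (-l))
  rw [← Real.exp_eq_exp_ℝ, ← Real.exp_add, neg_add_cancel, Real.exp_zero] at h
  have e : poissonPMF l = fun j : ℕ => Real.exp (-l) * (l ^ j / (Nat.factorial j)) := by
    funext j
    unfold _root_.poissonPMF; ring
  rw [e]; exact h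

lemma ppmf_summable_add (l : ℝ) (j : ℕ) : Summable (fun i => poissonPMF l (j + i)) := by
  have := (summable_nat_add_iff (f := poissonPMF l) j).2 (ppmf_hasSum l).summable
  simpa [add_comm] using this

lemma ptail_pos {l : ℝ} (hl : 0 < l) (j : ℕ) : 0 < poissonTail l j :=
  (ppmf_summable_add l j).tsum_pos (fun i => (ppmf_pos hl _).le) 0 (ppmf_pos hl _)

lemma ptail_succ (l : ℝ) (j : ℕ) : poissonTail l j = poissonPMF l j + poissonTail l (j + 1) := by
  unfold poissonTail
  rw [(ppmf_summable_add l j).tsum_eq_zero_add]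
  simp only [add_zero]
  congr 1
  apply tsum_congr
  intro i
  congr 1
  ring

lemma pcdf_add_tail (l : ℝ) (j : ℕ) : poissonCDF l j + poissonTail l (j + 1) = 1 := by
  have := (ppmf_hasSum l).summable.sum_add_tsum_nat_add (j + 1)
  rw [(ppmf_hasSum l).tsum_eq] at this
  rw [← this]
  unfold poissonCDF poissonTail
  congr 1
  apply tsum_congr
  intro i
  rw [add_comm]

/-- the left branch of the Stein solution -/
noncomputable def qSt (l : ℝ) : ℕ → ℝ
  | 0 => 0
  | j + 1 => (1 + j * qSt l j) / l

lemma qSt_rec {l : ℝ} (hl : 0 < l) (j : ℕ) : l * qSt l (j + 1) = 1 + j * qSt l j := by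
  simp only [qSt]; field_simp

lemma qSt_pos {l : ℝ} (hl : 0 < l) (j : ℕ) : 0 < qSt l (j + 1) := by
  induction j with
  | zero => simp [qSt, hl]
  | succ n ih => rw [qSt]; positivity

lemma qSt_d {l : ℝ} (hl : 0 < l) (j : ℕ) : 0 ≤ qSt l (j + 2) - qSt l (j + 1) := by
  induction j with
  | zero =>
    have h1 := qSt_rec hl 0
    have h2 := qSt_rec hl 1
    have h3 := qSt_pos hl 0
    push_cast at h1 h2
    simp only [zero_add, Nat.reduceAdd] at *
    by_contra! h
    nlinarith
  | succ n ih =>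
    have h1 := qSt_rec hl (n + 1)
    have h2 := qSt_rec hl (n + 2)
    have h3 := qSt_pos hl (n + 1)
    push_cast at h1 h2
    have h : l * (qSt l (n + 2 + 1) - qSt l (n + 2)) =
      (n + 1) * (qSt l (n + 2) - qSt l (n + 1)) + qSt l (n + 2) := by
        rw [show n + 2 = n + 1 + 1 from rfl] at *
        linarith
    have h4 : 0 ≤ l * (qSt l (n + 2 + 1) - qSt l (n + 2)) := by
      rw [h]; positivity
    exact nonneg_of_mul_nonneg_right h4 hl

lemma qSt_drec {l : ℝ} (hl : 0 < l) (n : ℕ) : l * (qSt l (n + 2) - qSt l (n + 1)) =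
      n * (qSt l (n + 1) - qSt l n) + qSt l (n + 1) := by
  have h1 := qSt_rec hl n
  have h2 := qSt_rec hl (n + 1)
  push_cast at h1 h2
  linarith

lemma qSt_e {l : ℝ} (hl : 0 < l) (j : ℕ) :
    qSt l (j + 2) - qSt l (j + 1) ≤ qSt l (j + 3) - qSt l (j + 2) := by
  suffices h : 0 ≤ l * ((qSt l (j + 3) - qSt l (j + 2)) - (qSt l (j + 2) - qSt l (j + 1))) by
    linarith [nonneg_of_mul_nonneg_right h hl]
  induction j with
  | zero =>
    have h1 := qSt_drec hl 0
    have h2 := qSt_drec hl 1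
    have h3 := qSt_d hl 0
    push_cast at h1 h2
    simp only [zero_add, Nat.reduceAdd] at *
    linarith
  | succ n ih =>
    have h1 := qSt_drec hl (n + 1)
    have h2 := qSt_drec hl (n + 2)
    have h3 := qSt_d hl (n + 1)
    have ih' := nonneg_of_mul_nonneg_right ih hl
    push_cast at h1 h2
    have : l * ((qSt l (n + 1 + 3) - qSt l (n + 1 + 2)) - (qSt l (n + 1 + 2) - qSt l (n + 1 + 1)))
      = (n + 1) * ((qSt l (n + 3) - qSt l (n + 2)) - (qSt l (n + 2) - qSt l (n + 1)))
        + 2 * (qSt l (n + 1 + 2) - qSt l (n + 1 + 1)) := by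
      simp only [add_assoc, Nat.reduceAdd] at *
      linarith
    rw [this]
    positivity

lemma qSt_dmono {l : ℝ} (hl : 0 < l) :
    Monotone (fun j => qSt l (j + 2) - qSt l (j + 1)) :=
  monotone_nat_of_le_succ (qSt_e hl)

lemma qSt_mono {l : ℝ} (hl : 0 < l) : Monotone (fun j => qSt l (j + 1)) :=
  monotone_nat_of_le_succ (fun n => by linarith [qSt_d hl n])

lemma qSt_eq {l : ℝ} (hl : 0 < l) (j : ℕ) :
    qSt l (j + 1) = poissonCDF l j / (((j : ℝ) + 1) * poissonPMF l (j + 1)) := by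
  have hp := ppmf_pos hl
  rw [eq_div_iff (by have := hp (j + 1); positivity)]
  induction j with
  | zero =>
    have := ppmf_succ l 0
    have h1 := qSt_rec hl 0
    push_cast at *
    simp only [poissonCDF, Finset.sum_range_succ, Finset.sum_range_zero, zero_add] at *
    rw [this]; linear_combination poissonPMF l 0 * h1
  | succ n ih =>
    have h0 := ppmf_succ l n
    have h := ppmf_succ l (n + 1)
    have h1 := qSt_rec hl (n + 1)
    have h2 : poissonCDF l (n + 1) = poissonCDF l n + poissonPMF l (n + 1) := by
      simp [poissonCDF, Finset.sum_range_succ]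
    rw [h, h2, ← ih]
    push_cast at *
    linear_combination poissonPMF l (n + 1) * h1

/-- lower bound for the largest left increment -/
lemma qSt_lower {l : ℝ} (hl : 0 < l) (n : ℕ) (hn : l < n + 2) :
    1 / (2 * l) ≤ qSt l (n + 2) - qSt l (n + 1) := by
  suffices h : 1 / 2 ≤ l * (qSt l (n + 2) - qSt l (n + 1)) by
    rw [div_le_iff₀ (by positivity)]; linarith
  have h1 := qSt_rec hl (n + 1)
  have hq := qSt_pos hl n
  push_cast at h1
  have h1' : l * (qSt l (n + 2) - qSt l (n + 1)) = 1 + (n + 1 - l) * qSt l (n + 1) := by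
    simp only [add_assoc, Nat.reduceAdd] at *
    linarith
  rw [h1']
  rcases le_or_gt l (n + 1) with h | h
  · have : 0 ≤ (n + 1 - l) * qSt l (n + 1) := mul_nonneg (by linarith) hq.le
    linarith
  · have key : ∀ j : ℕ, j + 1 ≤ n → qSt l (j + 1) ≤ 1 / 2 := by
      intro j
      induction j with
      | zero =>
        intro hj
        have h2 := qSt_rec hl 0
        have : (1 : ℝ) ≤ n := by exact_mod_cast hj
        push_cast at h2
        simp only [zero_mul, add_zero, zero_add] at *
        by_contra! hc
        nlinarith
      | succ m ih =>
        intro hj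
        have h2 := qSt_rec hl (m + 1)
        have ih := ih (by omega)
        have : (m : ℝ) + 1 + 1 ≤ n := by exact_mod_cast hj
        push_cast at h2
        by_contra! hc
        have h3 : ((m : ℝ) + 1) * qSt l (m + 1) ≤ (m + 1) * (1 / 2) := by gcongr
        nlinarith
    have h3 : (n : ℝ) * qSt l n ≤ n * (1 / 2) := by
      rcases n with _ | m
      · simp
      · gcongr
        exact key m le_rfl
    have h2 := qSt_rec hl n
    have h4 : l * qSt l (n + 1) ≤ (n + 2) / 2 := by linarith
    have h5 : (l - (n + 1)) * (l * qSt l (n + 1)) ≤ (l - (n + 1)) * ((n + 2) / 2) := by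
      gcongr
    have h6 : (l - (n + 1)) * ((n + 2) / 2) ≤ l * (1 / 2) := by
      have : (0 : ℝ) ≤ n := by positivity
      nlinarith
    have h7 : l * ((l - (n + 1)) * qSt l (n + 1)) ≤ l * (1 / 2) := by linarith
    have := le_of_mul_le_mul_left h7 hl
    linarith

/-- the right branch of the Stein solution -/
noncomputable def rSt (l : ℝ) (j : ℕ) : ℝ := poissonTail l j / (j * poissonPMF l j)

lemma rSt_pos {l : ℝ} (hl : 0 < l) (j : ℕ) : 0 < rSt l (j + 1) := by
  have := ptail_pos hl (j + 1)
  have := ppmf_pos hl (j + 1)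
  unfold rSt; positivity

lemma rSt_rec {l : ℝ} (hl : 0 < l) (j : ℕ) :
    l * rSt l (j + 2) = (j + 1 : ℝ) * rSt l (j + 1) - 1 := by
  have h1 := ptail_succ l (j + 1)
  have h3 := ppmf_succ l (j + 1)
  have := ppmf_pos hl (j + 1)
  unfold rSt
  push_cast at *
  rw [h1, show (j : ℝ) + 2 = j + 1 + 1 by ring, show j + 2 = j + 1 + 1 from rfl, h3]
  field_simp
  ring

noncomputable def tSt (l : ℝ) (j i : ℕ) : ℝ := poissonPMF l (j + i) / (j * poissonPMF l j)

lemma tSt_hasSum (l : ℝ) (j : ℕ) : HasSum (tSt l j) (rSt l j) :=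
  (ppmf_summable_add l j).hasSum.div_const _

lemma tSt_eq {l : ℝ} (hl : 0 < l) (j i : ℕ) :
    tSt l (j + 1) i = l ^ i * (Nat.factorial j) / (Nat.factorial (j + 1 + i)) := by
  unfold tSt _root_.poissonPMF
  rw [Nat.factorial_succ j, pow_add]
  have := Real.exp_pos (-l)
  push_cast
  field_simp

lemma tSt_succ {l : ℝ} (hl : 0 < l) (j i : ℕ) :
    tSt l (j + 2) i = tSt l (j + 1) i * ((j + 1) / (j + i + 2)) := by
  rw [tSt_eq hl j, show j + 2 = j + 1 + 1 from rfl, tSt_eq hl (j + 1),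
    show j + 1 + 1 + i = (j + 1 + i) + 1 by ring, Nat.factorial_succ j,
    Nat.factorial_succ (j + 1 + i)]
  have : (j : ℝ) + i + 2 ≠ 0 := by positivity
  have : (j : ℝ) + 1 + i + 1 ≠ 0 := by positivity
  push_cast
  field_simp
  ring

lemma tSt_pos {l : ℝ} (hl : 0 < l) (j i : ℕ) : 0 < tSt l (j + 1) i := by
  rw [tSt_eq hl]; positivity

lemma rSt_d {l : ℝ} (hl : 0 < l) (j : ℕ) : rSt l (j + 2) ≤ rSt l (j + 1) := by
  refine hasSum_le (fun i => ?_) (tSt_hasSum l _) (tSt_hasSum l _)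
  rw [tSt_succ hl]
  apply mul_le_of_le_one_right (tSt_pos hl j i).le
  rw [div_le_one (by positivity)]
  have : (0 : ℝ) ≤ i := by positivity
  linarith

lemma rSt_e {l : ℝ} (hl : 0 < l) (j : ℕ) :
    rSt l (j + 2) - rSt l (j + 3) ≤ rSt l (j + 1) - rSt l (j + 2) := by
  refine hasSum_le (fun i => ?_) ((tSt_hasSum l _).sub (tSt_hasSum l _))
    ((tSt_hasSum l _).sub (tSt_hasSum l _))
  have h1 := tSt_succ hl (j + 1) i
  simp only [add_assoc, Nat.reduceAdd] at h1
  rw [h1, tSt_succ hl]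
  have hp := tSt_pos hl j i
  push_cast
  have : 0 ≤ tSt l (j + 1) i * (((i : ℝ) + 1) * (i + 2) / ((j + i + 2) * (j + i + 3))) := by
    positivity
  have h2 : tSt l (j + 1) i - tSt l (j + 1) i * ((j + 1) / (j + i + 2)) -
     (tSt l (j + 1) i * ((j + 1) / (j + i + 2)) -
      tSt l (j + 1) i * ((j + 1) / (j + i + 2)) * ((j + 1 + 1) / (j + 1 + i + 2)))
      = tSt l (j + 1) i * (((i : ℝ) + 1) * (i + 2) / ((j + i + 2) * (j + i + 3))) := by
    have : (j : ℝ) + i + 2 ≠ 0 := by positivity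
    have : (j : ℝ) + i + 3 ≠ 0 := by positivity
    rw [show (j : ℝ) + 1 + i + 2 = j + i + 3 by ring]
    field_simp
    ring
  simp only [add_assoc] at *
  linarith

lemma rSt_dmono {l : ℝ} (hl : 0 < l) : Antitone (fun j => rSt l (j + 1) - rSt l (j + 2)) :=
  antitone_nat_of_succ_le (rSt_e hl)

lemma rSt_mono {l : ℝ} (hl : 0 < l) : Antitone (fun j => rSt l (j + 1)) :=
  antitone_nat_of_succ_le (rSt_d hl)

lemma SteinC1_ge {l : ℝ} (hl : 0 < l) (n : ℕ) :
    qSt l (n + 2) - qSt l (n + 1) ≤ SteinC1 l (n + 2) ∧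
    poissonCDF l (n + 1) / poissonTail l (n + 2) * (rSt l (n + 2) - rSt l (n + 3))
      ≤ SteinC1 l (n + 2) := by
  have hp := ppmf_pos hl (n + 2)
  have hp1 := ppmf_pos hl (n + 1)
  have ht := ptail_pos hl (n + 2)
  have hF : ∀ j, 0 < poissonCDF l j := fun j =>
    Finset.sum_pos (fun i _ => ppmf_pos hl i) ⟨0, by simp⟩
  have hF1 := hF (n + 1)
  have hs := ppmf_succ l (n + 1)
  have hs2 := ppmf_succ l (n + 2)
  have hC0 : SteinC0 l (n + 2) = qSt l (n + 2) := by
    rw [qSt_eq hl (n + 1)]; unfold SteinC0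
    push_cast
    congr 2; ring
  have hC0pos : 0 ≤ SteinC0 l (n + 2) := by rw [hC0]; exact (qSt_pos hl _).le
  unfold SteinC1
  constructor
  · refine le_trans (le_of_eq ?_) (mul_le_mul_of_nonneg_left
      (sub_le_sub_left (min_le_left _ _) 1) hC0pos)
    rw [hC0, qSt_eq hl (n + 1), qSt_eq hl n]
    push_cast at *
    rw [hs, show (n : ℝ) + 2 - 1 = n + 1 by ring]
    field_simp
  · refine le_trans (le_of_eq ?_) (mul_le_mul_of_nonneg_left
      (sub_le_sub_left (min_le_right _ _) 1) hC0pos)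
    unfold SteinC0 rSt
    push_cast at *
    rw [show (n : ℝ) + 3 = n + 2 + 1 by ring, show n + 3 = n + 2 + 1 from rfl, hs2]
    field_simp

lemma stein_exists {l : ℝ} (hl : 0 < l) (k : ℕ) (hk : 2 ≤ k) (hkl : l < k) :
    ∃ φ : ℤ → ℝ, (∃ B, ∀ j, |φ j| ≤ B) ∧ (∀ j, |φ (j + 1) - φ j| ≤ SteinC1 l k) ∧
      ∀ j : ℤ, |l * φ (j + 1) - j * φ j - (1 - (if (k : ℤ) ≤ j then 1 else 0) / poissonTail l k)|
        ≤ if j ≤ -2 then 1 else 0 := by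
  obtain ⟨n, rfl⟩ : ∃ n, k = n + 2 := ⟨k - 2, by omega⟩
  obtain ⟨hD1, hD2⟩ := SteinC1_ge hl n
  have hlow : 1 / (2 * l) ≤ SteinC1 l (n + 2) :=
    (qSt_lower hl n (by push_cast at hkl; exact hkl)).trans hD1
  set D := SteinC1 l (n + 2)
  have hD : 0 ≤ D := le_trans (by positivity) hlow
  have ht := ptail_pos hl (n + 2)
  have hRpos : 0 < poissonCDF l (n + 1) / poissonTail l (n + 2) :=
    div_pos (Finset.sum_pos (fun i _ => ppmf_pos hl i) ⟨0, by simp⟩) ht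
  have hRq : poissonCDF l (n + 1) / poissonTail l (n + 2) * rSt l (n + 2) = qSt l (n + 2) := by
    rw [qSt_eq hl (n + 1)]; unfold rSt
    push_cast
    rw [show (n : ℝ) + 1 + 1 = n + 2 by ring]
    have := ppmf_pos hl (n + 2)
    field_simp
  have hR1 : poissonCDF l (n + 1) / poissonTail l (n + 2) = 1 / poissonTail l (n + 2) - 1 := by
    have := pcdf_add_tail l (n + 1)
    simp only [add_assoc, Nat.reduceAdd] at this
    field_simp
    linarith
  set R := poissonCDF l (n + 1) / poissonTail l (n + 2)
  set x : ℝ := 1 / (2 * (1 + l)) with hx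
  have hx0 : 0 < x := by positivity
  have hxl : x * (1 + l) = 1 / 2 := by rw [hx]; field_simp
  let φ : ℤ → ℝ := fun j => if j ≤ -2 then 0 else if j = -1 then x else if j = 0 then (1 - x) / l
    else if j ≤ n + 2 then qSt l j.toNat else R * rSt l j.toNat
  have φneg : ∀ j : ℤ, j ≤ -2 → φ j = 0 := fun j hj => by simp [φ, hj]
  have φm1 : φ (-1) = x := by simp [φ]
  have φ0 : φ 0 = (1 - x) / l := by simp [φ]
  have φq : ∀ m : ℕ, m ≤ n + 1 → φ ((m : ℤ) + 1) = qSt l (m + 1) := fun m hm => by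
    simp only [φ]
    rw [if_neg (by omega), if_neg (by omega), if_neg (by omega), if_pos (by omega)]
    congr 1
  have φr : ∀ m : ℕ, n + 1 ≤ m → φ ((m : ℤ) + 1) = R * rSt l (m + 1) := fun m hm => by
    rcases hm.eq_or_lt with rfl | hm
    · rw [φq _ le_rfl]; exact hRq.symm
    simp only [φ]
    rw [if_neg (by omega), if_neg (by omega), if_neg (by omega), if_neg (by omega)]
    congr 1
  have cases : ∀ j : ℤ, j ≤ -3 ∨ j = -2 ∨ j = -1 ∨ j = 0 ∨ (∃ m : ℕ, m ≤ n ∧ j = m + 1) ∨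
      (∃ m : ℕ, n + 1 ≤ m ∧ j = m + 1) := by
    intro j
    by_cases h : j ≤ 0
    · omega
    · right; right; right; right
      by_cases h' : j ≤ n + 1
      · left; exact ⟨(j - 1).toNat, by omega, by omega⟩
      · right; exact ⟨(j - 1).toNat, by omega, by omega⟩
  have hq1 : qSt l 1 = 1 / l := by simp [qSt]
  have φ1 : φ 1 = 1 / l := by
    have := φq 0 (by omega)
    simpa [hq1] using this
  refine ⟨φ, ⟨max (max x |(1 - x) / l|) (qSt l (n + 2)), ?_⟩, ?_, ?_⟩
  · intro j
    rcases cases j with h | rfl | rfl | rfl | ⟨m, hm, rfl⟩ | ⟨m, hm, rfl⟩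
    · rw [φneg _ (by omega)]; simp [hx0.le]
    · rw [φneg _ (by omega)]; simp [hx0.le]
    · rw [φm1, abs_of_pos hx0]; simp
    · rw [φ0]; simp
    · rw [φq m (by omega), abs_of_pos (qSt_pos hl _)]
      exact le_max_of_le_right (qSt_mono hl (show m ≤ n + 1 by omega))
    · rw [φr m hm, abs_of_pos (mul_pos hRpos (rSt_pos hl _)), ← hRq]
      exact le_max_of_le_right (mul_le_mul_of_nonneg_left (rSt_mono hl hm) hRpos.le)
  · have hx2 : x ≤ 1 / (2 * l) := by
      rw [hx]; gcongr; linarith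
    intro j
    rcases cases j with h | rfl | rfl | rfl | ⟨m, hm, rfl⟩ | ⟨m, hm, rfl⟩
    · rw [φneg _ (by omega), φneg _ (by omega)]; simpa using hD
    · norm_num only
      rw [φm1, φneg _ (by omega), sub_zero, abs_of_pos hx0]; linarith
    · norm_num only
      rw [φm1, φ0]
      have : (1 - x) / l - x = 1 / (2 * l) := by
        field_simp; linarith
      rw [this, abs_of_pos (by positivity)]; exact hlow
    · norm_num only
      rw [φ1, φ0]
      have : 1 / l - (1 - x) / l = x / l := by ring
      rw [this, abs_of_pos (by positivity)]
      refine le_trans ?_ hlow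
      rw [div_le_div_iff₀ hl (by positivity)]
      nlinarith
    · have h1 := φq (m + 1) (by omega)
      push_cast at h1
      rw [h1, φq m (by omega), abs_of_nonneg (qSt_d hl m)]
      exact (qSt_dmono hl hm).trans hD1
    · have h1 := φr (m + 1) (by omega)
      push_cast at h1
      rw [h1, φr m hm, ← mul_sub, abs_mul, abs_of_pos hRpos, abs_sub_comm,
        abs_of_nonneg (by have := rSt_d hl m; simp only [add_assoc, Nat.reduceAdd]; linarith)]
      exact (mul_le_mul_of_nonneg_left (rSt_dmono hl hm) hRpos.le).trans hD2
  · intro j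
    rcases cases j with h | rfl | rfl | rfl | ⟨m, hm, rfl⟩ | ⟨m, hm, rfl⟩
    · rw [φneg _ (by omega), φneg _ (by omega), if_neg (by push_cast; omega), if_pos (by omega)]
      simp
    · rw [show (-2 : ℤ) + 1 = (-1) from rfl]
      rw [φm1, φneg _ (by omega), if_neg (by push_cast; omega)]
      rw [if_pos le_rfl, zero_div, abs_le]; constructor <;> nlinarith
    · rw [show (-1 : ℤ) + 1 = 0 from rfl]
      rw [φm1, φ0, if_neg (by push_cast; omega), if_neg (by omega)]
      have : l * ((1 - x) / l) = 1 - x := by field_simp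
      rw [this]; push_cast; apply le_of_eq; rw [abs_eq_zero]; ring
    · rw [show (0 : ℤ) + 1 = 1 from rfl]
      rw [φ1, φ0, if_neg (by push_cast; omega), if_neg (by omega)]
      have : l * (1 / l) = 1 := by field_simp
      rw [this]; push_cast; apply le_of_eq; rw [abs_eq_zero]; ring
    · have h1 := φq (m + 1) (by omega)
      have h2 := qSt_rec hl (m + 1)
      push_cast at h1 h2
      rw [h1, φq m (by omega), if_neg (by push_cast; omega), if_neg (by omega)]
      push_cast; apply le_of_eq; rw [abs_eq_zero, zero_div]; linarith
    · have h1 := φr (m + 1) (by omega)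
      have h2 := rSt_rec hl m
      push_cast at h1
      rw [h1, φr m (by omega), if_pos (by push_cast; omega), if_neg (by omega)]
      push_cast; apply le_of_eq; rw [abs_eq_zero]
      simp only [add_assoc, Nat.reduceAdd] at *
      norm_num only at *
      linear_combination R * h2 - hR1

lemma lip_of_step {φ : ℤ → ℝ} {D : ℝ} (h : ∀ j, |φ (j + 1) - φ j| ≤ D) (m n : ℤ) :
    |φ m - φ n| ≤ D * |((m - n : ℤ) : ℝ)| := by
  have key : ∀ (n : ℤ) (d : ℕ), |φ (n + d) - φ n| ≤ D * d := by
    intro n d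
    induction d with
    | zero => simp
    | succ d ih =>
      have h1 := h (n + d)
      have := abs_sub_le (φ (n + d + 1)) (φ (n + d)) (φ n)
      push_cast
      rw [← add_assoc]
      linarith
  rcases le_total n m with hmn | hmn
  · have := key n (m - n).toNat
    have e : ((m - n).toNat : ℤ) = m - n := by omega
    have e' : (((m - n).toNat : ℕ) : ℝ) = ((m - n : ℤ) : ℝ) := by exact_mod_cast e
    rw [e', e, add_sub_cancel] at this
    rwa [abs_of_nonneg (a := ((m - n : ℤ) : ℝ)) (by exact_mod_cast (by omega))]
  · have := key m (n - m).toNat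
    have e : ((n - m).toNat : ℤ) = n - m := by omega
    have e' : (((n - m).toNat : ℕ) : ℝ) = ((n - m : ℤ) : ℝ) := by exact_mod_cast e
    rw [e', e, add_sub_cancel, abs_sub_comm] at this
    rw [abs_of_nonpos (a := ((m - n : ℤ) : ℝ)) (by exact_mod_cast (by omega))]
    push_cast at *; linarith

lemma size_bias_int {Ω : Type*} [MeasurableSpace Ω]
    (P : Measure Ω) [IsProbabilityMeasure P]
    (W Ws : Ω → ℕ) (hWmeas : Measurable W) (hWsmeas : Measurable Ws)
    (μ : ℝ) (hμpos : 0 < μ)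
    (hWint : Integrable (fun ω => (W ω : ℝ)) P)
    (hsize : ∀ w : ℕ, (P {ω | Ws ω = w}).toReal = w * (P {ω | W ω = w}).toReal / μ)
    (g : ℕ → ℝ) (B : ℝ) (hB : ∀ n, |g n| ≤ B) :
    Integrable (fun ω => g (Ws ω)) P ∧ Integrable (fun ω => (W ω : ℝ) * g (W ω)) P ∧
    ∫ ω, (W ω : ℝ) * g (W ω) ∂P = μ * ∫ ω, g (Ws ω) ∂P := by
  have hg : Measurable g := measurable_from_top
  have i1 : Integrable (fun ω => g (Ws ω)) P :=
    Integrable.of_bound (hg.comp hWsmeas).aestronglyMeasurable B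
      (Filter.Eventually.of_forall fun ω => hB _)
  have i2 : Integrable (fun ω => (W ω : ℝ) * g (W ω)) P :=
    hWint.mul_bdd (c := B) (hg.comp hWmeas).aestronglyMeasurable
      (Filter.Eventually.of_forall fun ω => hB _)
  refine ⟨i1, i2, ?_⟩
  have e1 : ∫ ω, g (Ws ω) ∂P = ∑' n, (P {ω | Ws ω = n}).toReal * g n := by
    rw [← integral_map (f := g) hWsmeas.aemeasurable hg.aestronglyMeasurable,
      integral_countable]
    · apply tsum_congr; intro n
      rw [measureReal_def, Measure.map_apply hWsmeas (measurableSet_singleton n)]; rfl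
    · exact (integrable_map_measure hg.aestronglyMeasurable hWsmeas.aemeasurable).2 i1
  have hg2 : Measurable (fun n : ℕ => (n : ℝ) * g n) := measurable_from_top
  have e2 : ∫ ω, (W ω : ℝ) * g (W ω) ∂P = ∑' n : ℕ, (P {ω | W ω = n}).toReal * (n * g n) := by
    rw [← integral_map (f := fun n : ℕ => (n : ℝ) * g n) hWmeas.aemeasurable
      hg2.aestronglyMeasurable, integral_countable]
    · apply tsum_congr; intro n
      rw [measureReal_def, Measure.map_apply hWmeas (measurableSet_singleton n)]; rfl
    · exact (integrable_map_measure hg2.aestronglyMeasurable hWmeas.aemeasurable).2 i2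
  rw [e1, e2, ← tsum_mul_left]
  apply tsum_congr; intro n
  rw [hsize]; field_simp

/-- Theorem 2 (size-biased version): moderate deviation bound via the size-biased coupling. -/
theorem poisson_md_size_biased {Ω : Type*} [MeasurableSpace Ω]
    (P : Measure Ω) [IsProbabilityMeasure P]
    (W Ws : Ω → ℕ) (hWmeas : Measurable W) (hWsmeas : Measurable Ws)
    (μ : ℝ) (hμpos : 0 < μ) (hμ : μ = ∫ ω, (W ω : ℝ) ∂P)
    (hWint : Integrable (fun ω => (W ω : ℝ)) P)
    (hdiffint : Integrable (fun ω => |(W ω : ℝ) + 1 - (Ws ω : ℝ)|) P)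
    (hsize : ∀ w : ℕ, (P {ω | Ws ω = w}).toReal = w * (P {ω | W ω = w}).toReal / μ)
    (a : ℤ) (ha : (a : ℝ) < μ) (lam : ℝ) (hlam : lam = μ - a)
    (k : ℕ) (hk : 2 ≤ k) (hkl : lam < k) :
    |(P {ω | (k : ℤ) ≤ (W ω : ℤ) - a}).toReal / poissonTail lam k - 1| ≤
      SteinC1 lam k * (μ * (∫ ω, |(W ω : ℝ) + 1 - (Ws ω : ℝ)| ∂P) + |μ - lam|)
        + (P {ω | (W ω : ℤ) - a ≤ -2}).toReal := by

  have hl : 0 < lam := by linarith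
  obtain ⟨φ, ⟨B, hB⟩, hstep, hst⟩ := stein_exists hl k hk hkl
  have hlip := lip_of_step hstep
  have ht := ptail_pos hl k
  set D := SteinC1 lam k
  set T := poissonTail lam k
  obtain ⟨iWs, iWW, hsb⟩ := size_bias_int P W Ws hWmeas hWsmeas μ hμpos hWint hsize
    (fun n => φ ((n : ℤ) - a)) B (fun n => hB _)
  have ib : ∀ g : ℕ → ℝ, ∀ C : ℝ, (∀ n, |g n| ≤ C) → Integrable (fun ω => g (W ω)) P := by
    intro g C hg
    exact Integrable.of_bound ((measurable_from_top (f := g)).comp hWmeas).aestronglyMeasurable C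
      (Filter.Eventually.of_forall fun ω => hg _)
  have iZ : Integrable (fun ω => φ ((W ω : ℤ) - a)) P := ib (fun n => φ ((n : ℤ) - a)) B fun _ => hB _
  have iZ1 : Integrable (fun ω => φ ((W ω : ℤ) - a + 1)) P :=
    ib (fun n => φ ((n : ℤ) - a + 1)) B fun _ => hB _
  have mS : ∀ p : ℕ → Prop, MeasurableSet {ω | p (W ω)} := fun p =>
    hWmeas (show MeasurableSet {n | p n} from trivial)
  have mA := mS (fun n => (k : ℤ) ≤ (n : ℤ) - a)
  have mN := mS (fun n => (n : ℤ) - a ≤ -2)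
  have iA : Integrable ({ω | (k : ℤ) ≤ (W ω : ℤ) - a}.indicator (fun _ => (1 : ℝ))) P :=
    (integrable_const _).indicator mA
  have iN : Integrable ({ω | (W ω : ℤ) - a ≤ -2}.indicator (fun _ => (1 : ℝ))) P :=
    (integrable_const _).indicator mN
  have vA : ∫ ω, {ω | (k : ℤ) ≤ (W ω : ℤ) - a}.indicator (fun _ => (1 : ℝ)) ω ∂P
      = (P {ω | (k : ℤ) ≤ (W ω : ℤ) - a}).toReal := by
    rw [integral_indicator_const _ mA]; simp [measureReal_def]
  have vN : ∫ ω, {ω | (W ω : ℤ) - a ≤ -2}.indicator (fun _ => (1 : ℝ)) ω ∂P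
      = (P {ω | (W ω : ℤ) - a ≤ -2}).toReal := by
    rw [integral_indicator_const _ mN]; simp [measureReal_def]
  -- the Stein expression
  let S : Ω → ℝ := fun ω => lam * φ ((W ω : ℤ) - a + 1) -
    ((W ω : ℝ) * φ ((W ω : ℤ) - a) - a * φ ((W ω : ℤ) - a))
  have iS : Integrable S P := (iZ1.const_mul _).sub (iWW.sub (iZ.const_mul _))
  have vS : ∫ ω, S ω ∂P = μ * (∫ ω, (φ ((W ω : ℤ) - a + 1) - φ ((Ws ω : ℤ) - a)) ∂P)
      - a * (∫ ω, (φ ((W ω : ℤ) - a + 1) - φ ((W ω : ℤ) - a)) ∂P) := by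
    have : ∫ ω, S ω ∂P = lam * (∫ ω, φ ((W ω : ℤ) - a + 1) ∂P) -
        ((∫ ω, (W ω : ℝ) * φ ((W ω : ℤ) - a) ∂P) - a * (∫ ω, φ ((W ω : ℤ) - a) ∂P)) := by
      simp only [S]
      have iY : Integrable (fun ω => (W ω : ℝ) * φ ((W ω : ℤ) - a) - a * φ ((W ω : ℤ) - a)) P :=
        iWW.sub (iZ.const_mul _)
      rw [integral_sub (iZ1.const_mul _) iY,
        integral_sub iWW (iZ.const_mul _), integral_const_mul, integral_const_mul]
    rw [this, hsb, integral_sub iZ1 iWs, integral_sub iZ1 iZ, hlam]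
    ring
  have b1 : |∫ ω, (φ ((W ω : ℤ) - a + 1) - φ ((Ws ω : ℤ) - a)) ∂P|
      ≤ D * ∫ ω, |(W ω : ℝ) + 1 - (Ws ω : ℝ)| ∂P := by
    refine abs_integral_le_integral_abs.trans ?_
    rw [← integral_const_mul]
    refine integral_mono (iZ1.sub iWs).abs (hdiffint.const_mul _) fun ω => ?_
    have := hlip ((W ω : ℤ) - a + 1) ((Ws ω : ℤ) - a)
    have e : (((W ω : ℤ) - a + 1 - ((Ws ω : ℤ) - a) : ℤ) : ℝ) = (W ω : ℝ) + 1 - (Ws ω : ℝ) := by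
      push_cast; ring
    rwa [e] at this
  have b2 : |∫ ω, (φ ((W ω : ℤ) - a + 1) - φ ((W ω : ℤ) - a)) ∂P| ≤ D := by
    refine abs_integral_le_integral_abs.trans ?_
    calc _ ≤ ∫ _, D ∂P := integral_mono (iZ1.sub iZ).abs (integrable_const _) fun ω => hstep _
      _ = D := by simp
  have bS : |∫ ω, S ω ∂P| ≤ D * (μ * (∫ ω, |(W ω : ℝ) + 1 - (Ws ω : ℝ)| ∂P) + |μ - lam|) := by
    rw [vS, show μ - lam = (a : ℝ) by rw [hlam]; ring]
    refine (abs_sub _ _).trans ?_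
    rw [abs_mul, abs_mul, abs_of_pos hμpos]
    have h1 := mul_le_mul_of_nonneg_left b1 hμpos.le
    have h2 := mul_le_mul_of_nonneg_left b2 (abs_nonneg (a : ℝ))
    linarith
  -- comparison
  have iH : Integrable (fun ω => 1 -
      {ω | (k : ℤ) ≤ (W ω : ℤ) - a}.indicator (fun _ => (1 : ℝ)) ω / T) P :=
    (integrable_const _).sub (iA.div_const _)
  have vH : ∫ ω, (1 - {ω | (k : ℤ) ≤ (W ω : ℤ) - a}.indicator (fun _ => (1 : ℝ)) ω / T) ∂P
      = 1 - (P {ω | (k : ℤ) ≤ (W ω : ℤ) - a}).toReal / T := by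
    rw [integral_sub (integrable_const _) (iA.div_const _), integral_div, vA]; simp
  have bd : |∫ ω, S ω ∂P - (1 - (P {ω | (k : ℤ) ≤ (W ω : ℤ) - a}).toReal / T)|
      ≤ (P {ω | (W ω : ℤ) - a ≤ -2}).toReal := by
    rw [← vH, ← integral_sub iS iH, ← vN]
    refine abs_integral_le_integral_abs.trans ?_
    refine integral_mono (iS.sub iH).abs iN fun ω => ?_
    have := hst ((W ω : ℤ) - a)
    simp only [S, Set.indicator_apply, Set.mem_ofPred_eq]
    refine le_trans (le_of_eq ?_) this
    congr 1
    push_cast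
    ring
  rw [abs_le] at *
  constructor <;> linarith [bd.1, bd.2, bS.1, bS.2]
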